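/- Factorization and neutrality in the probabilistic Call-by-Value λ-calculus: (1) for all multi-distributions m, n, if m ⇒* n then there exists a multi-distribution d with m ⇛E* d and d ⇛¬E* n; (2) if m ⇛¬E n then obsN(m) = obsN(n). -/

import Mathlib

/-- Terms of the probabilistic Call-by-Value λ-calculus `Λ⊕`, in de Bruijn
representation: `M ::= x | λx.M | M M | M ⊕ M`. -/
inductive PTm : Type
  | var : ℕ → PTm
  | lam : PTm → PTm
  | app : PTm → PTm → PTm
  | oplus : PTm → PTm → PTm
deriving DecidableEq

namespace PTm

/-- Lift (shift by one) the free variables of index `≥ d`. -/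
def lift (d : ℕ) : PTm → PTm
  | var n => if n < d then var n else var (n + 1)
  | lam M => lam (lift (d + 1) M)
  | app M N => app (lift d M) (lift d N)
  | oplus M N => oplus (lift d M) (lift d N)

/-- Capture-avoiding substitution `M[N/k]`. -/
def subst : PTm → ℕ → PTm → PTm
  | var n, k, N => if n = k then N else if k < n then var (n - 1) else var n
  | lam M, k, N => lam (subst M (k + 1) (lift 0 N))
  | app M₁ M₂, k, N => app (subst M₁ k N) (subst M₂ k N)
  | oplus M₁ M₂, k, N => oplus (subst M₁ k N) (subst M₂ k N)

end PTm

/-- Values: variables and abstractions. -/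
inductive IsValue : PTm → Prop
  | var (n : ℕ) : IsValue (PTm.var n)
  | lam (M : PTm) : IsValue (PTm.lam M)

/-- Full βv-reduction on terms: closure of `(λx.M)V ↦βv M[V/x]` (`V` a value) under
arbitrary contexts `C ::= ⟨⟩ | λx.C | C M | M C | C ⊕ M | M ⊕ C`. -/
inductive FullBv : PTm → PTm → Prop
  | beta {M V} : IsValue V → FullBv (PTm.app (PTm.lam M) V) (M.subst 0 V)
  | lam {M M'} : FullBv M M' → FullBv (PTm.lam M) (PTm.lam M')
  | appL {M M' N} : FullBv M M' → FullBv (PTm.app M N) (PTm.app M' N)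
  | appR {M N N'} : FullBv N N' → FullBv (PTm.app M N) (PTm.app M N')
  | oplusL {M M' N} : FullBv M M' → FullBv (PTm.oplus M N) (PTm.oplus M' N)
  | oplusR {M N N'} : FullBv N N' → FullBv (PTm.oplus M N) (PTm.oplus M N')

/-- Weak βv-reduction: closure of `↦βv` under weak contexts `W ::= ⟨⟩ | W M | M W`. -/
inductive WeakBv : PTm → PTm → Prop
  | beta {M V} : IsValue V → WeakBv (PTm.app (PTm.lam M) V) (M.subst 0 V)
  | appL {M M' N} : WeakBv M M' → WeakBv (PTm.app M N) (PTm.app M' N)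
  | appR {M N N'} : WeakBv N N' → WeakBv (PTm.app M N) (PTm.app M N')

/-- `OplusRed M M₁ M₂` : `M = W⟨P ⊕ Q⟩` for a weak context `W`, with branches
`M₁ = W⟨P⟩` and `M₂ = W⟨Q⟩`. -/
inductive OplusRed : PTm → PTm → PTm → Prop
  | root (M N : PTm) : OplusRed (PTm.oplus M N) M N
  | appL {P P₁ P₂ Q} : OplusRed P P₁ P₂ →
      OplusRed (PTm.app P Q) (PTm.app P₁ Q) (PTm.app P₂ Q)
  | appR {P Q Q₁ Q₂} : OplusRed Q Q₁ Q₂ →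
      OplusRed (PTm.app P Q) (PTm.app P Q₁) (PTm.app P Q₂)

/-- Multi-distributions: finite multisets of pairs `(p, M)`. -/
abbrev MDist := Multiset (NNReal × PTm)

/-- The multi-distribution `[1 M]`. -/
def single (M : PTm) : MDist := {((1 : NNReal), M)}

/-- A multi-distribution proper: all probabilities are in `(0,1]` and their sum is `≤ 1`. -/
def IsMDist (m : MDist) : Prop :=
  (∀ q ∈ m, 0 < q.1 ∧ q.1 ≤ 1) ∧ (m.map Prod.fst).sum ≤ 1

/-- One-step reduction `→ := →βv ∪ →⊕` from terms to multi-distributions: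
`C⟨(λx.M)V⟩ →βv [C⟨M[V/x]⟩]` and `W⟨M ⊕ N⟩ →⊕ [½ W⟨M⟩, ½ W⟨N⟩]`. -/
inductive Step : PTm → MDist → Prop
  | bv {M M'} : FullBv M M' → Step M (single M')
  | oplus {M M₁ M₂} : OplusRed M M₁ M₂ →
      Step M {((1 : NNReal) / 2, M₁), ((1 : NNReal) / 2, M₂)}

/-- Surface reduction `→s`: weak βv-steps together with all `→⊕`-steps. -/
inductive SStep : PTm → MDist → Prop
  | bv {M M'} : WeakBv M M' → SStep M (single M')
  | oplus {M M₁ M₂} : OplusRed M M₁ M₂ →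
      SStep M {((1 : NNReal) / 2, M₁), ((1 : NNReal) / 2, M₂)}

/-- A term is normal if it has no `→`-step. -/
def TmNormal (M : PTm) : Prop := ∀ m, ¬ Step M m

/-- A term is surface-normal if it has no `→s`-step. -/
def SurfNormal (M : PTm) : Prop := ∀ m, ¬ SStep M m

/-- The unbiased βv-strategy `⊳βv` on `Λ⊕`: weak βv-steps as long as there are any;
once the term has no weak βv-redex, iterate in the subterms. -/
inductive UnbBv : PTm → PTm → Prop
  | weak {M M'} : WeakBv M M' → UnbBv M M'
  | lam {P P'} : (∀ s, ¬ WeakBv (PTm.lam P) s) → UnbBv P P' →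
      UnbBv (PTm.lam P) (PTm.lam P')
  | appL {P P' Q} : (∀ s, ¬ WeakBv (PTm.app P Q) s) → UnbBv P P' →
      UnbBv (PTm.app P Q) (PTm.app P' Q)
  | appR {P Q Q'} : (∀ s, ¬ WeakBv (PTm.app P Q) s) → UnbBv Q Q' →
      UnbBv (PTm.app P Q) (PTm.app P Q')
  | oplusL {P P' Q} : (∀ s, ¬ WeakBv (PTm.oplus P Q) s) → UnbBv P P' →
      UnbBv (PTm.oplus P Q) (PTm.oplus P' Q)
  | oplusR {P Q Q'} : (∀ s, ¬ WeakBv (PTm.oplus P Q) s) → UnbBv Q Q' →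
      UnbBv (PTm.oplus P Q) (PTm.oplus P Q')

/-- Unbiased evaluation `⊳E` from terms to multi-distributions: a surface step if the
term is not surface-normal; otherwise an unbiased βv-step. -/
inductive EStep : PTm → MDist → Prop
  | surf {M m} : ¬ SurfNormal M → SStep M m → EStep M m
  | unb {M M'} : SurfNormal M → UnbBv M M' → EStep M (single M')

/-- Internal steps `⋫E`: `→`-steps that are not `⊳E`-steps. -/
def IStep (M : PTm) (m : MDist) : Prop := Step M m ∧ ¬ EStep M m

/-- Scalar multiplication `p • m` of a multi-distribution. -/
def scale (p : NNReal) (m : MDist) : MDist := m.map fun q => (p * q.1, q.2)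

/-- Lifting of a relation `r` from terms to multi-distributions, to a relation on
multi-distributions: `[M] ⇒r [M]`; `[M] ⇒r m` whenever `M r m`; and
`[pᵢ Mᵢ]ᵢ ⇒r Σᵢ pᵢ·mᵢ` whenever `[Mᵢ] ⇒r mᵢ` for each `i`. -/
inductive Lift (r : PTm → MDist → Prop) : MDist → MDist → Prop
  | zero : Lift r 0 0
  | keep {p M m n} : Lift r m n → Lift r ((p, M) ::ₘ m) ((p, M) ::ₘ n)
  | step {p M d m n} : r M d → Lift r m n → Lift r ((p, M) ::ₘ m) (scale p d + n)

/-- Full lifting of a relation `r` from terms to multi-distributions: as `Lift`, but a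
component may stay put only if it is a normal form. -/
inductive FullLift (r : PTm → MDist → Prop) : MDist → MDist → Prop
  | zero : FullLift r 0 0
  | keep {p M m n} : TmNormal M → FullLift r m n →
      FullLift r ((p, M) ::ₘ m) ((p, M) ::ₘ n)
  | step {p M d m n} : r M d → FullLift r m n →
      FullLift r ((p, M) ::ₘ m) (scale p d + n)

open Classical in
/-- The observation `obsN`: the subdistribution over normal forms carried by a
multi-distribution, `obsN(m)(N) = Σ { pᵢ : Mᵢ = N }` for `N` normal (and `0` on
non-normal terms). Subdistributions are ordered pointwise. -/
noncomputable def obsN (m : MDist) : PTm → NNReal := fun N =>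
  if TmNormal N then ((m.filter fun q => q.2 = N).map Prod.fst).sum else 0

namespace PTm

theorem lift_lift (M : PTm) : ∀ i j, i ≤ j → lift i (lift j M) = lift (j+1) (lift i M) := by
  induction M with
  | var n =>
    intro i j h
    simp only [lift]
    split_ifs <;> simp only [lift] <;> split_ifs <;> first | rfl | omega
  | lam M ih => intro i j h; simp [lift, ih (i+1) (j+1) (by omega)]
  | app M N ih1 ih2 => intro i j h; simp [lift, ih1 i j h, ih2 i j h]
  | oplus M N ih1 ih2 => intro i j h; simp [lift, ih1 i j h, ih2 i j h]

theorem subst_lift (M : PTm) : ∀ k N, (lift k M).subst k N = M := by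
  induction M with
  | var n =>
    intro k N
    simp only [lift]
    split_ifs <;> simp only [subst] <;> split_ifs <;> first | rfl | omega
  | lam M ih => intro k N; simp [lift, subst, ih]
  | app M N ih1 ih2 => intro k N; simp [lift, subst, ih1, ih2]
  | oplus M N ih1 ih2 => intro k N; simp [lift, subst, ih1, ih2]

theorem lift_subst1 (M : PTm) : ∀ i k N, i ≤ k →
    lift i (M.subst k N) = (lift i M).subst (k+1) (lift i N) := by
  induction M with
  | var n =>
    intro i k N h
    simp only [lift, subst]
    split_ifs <;> (try simp only [lift, subst]) <;> (try split_ifs) <;>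
      first | rfl | omega | (congr 1; omega)
  | lam M ih =>
    intro i k N h
    simp [lift, subst, ih (i+1) (k+1) _ (by omega), lift_lift N 0 i (by omega)]
  | app M N ih1 ih2 => intro i k N h; simp [lift, subst, ih1 i k _ h, ih2 i k _ h]
  | oplus M N ih1 ih2 => intro i k N h; simp [lift, subst, ih1 i k _ h, ih2 i k _ h]

theorem lift_subst2 (M : PTm) : ∀ i k N, k ≤ i →
    lift i (M.subst k N) = (lift (i+1) M).subst k (lift i N) := by
  induction M with
  | var n =>
    intro i k N h
    simp only [lift, subst]
    split_ifs <;> (try simp only [lift, subst]) <;> (try split_ifs) <;>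
      first | rfl | omega | (congr 1; omega)
  | lam M ih =>
    intro i k N h
    simp [lift, subst, ih (i+1) (k+1) _ (by omega), lift_lift N 0 i (by omega)]
  | app M N ih1 ih2 => intro i k N h; simp [lift, subst, ih1 i k _ h, ih2 i k _ h]
  | oplus M N ih1 ih2 => intro i k N h; simp [lift, subst, ih1 i k _ h, ih2 i k _ h]

theorem subst_subst (M : PTm) : ∀ k j N L, k ≤ j →
    (M.subst k N).subst j L = (M.subst (j+1) (lift k L)).subst k (N.subst j L) := by
  induction M with
  | var n =>
    intro k j N L h
    rcases lt_trichotomy n k with h1 | h1 | h1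
    · have a1 : n ≠ k := by omega
      have a2 : ¬ k < n := by omega
      have a3 : n ≠ j := by omega
      have a4 : ¬ j < n := by omega
      have a5 : n ≠ j+1 := by omega
      have a6 : ¬ j+1 < n := by omega
      simp [subst, a1, a2, a3, a4, a5, a6]
    · subst h1
      have a5 : n ≠ j+1 := by omega
      have a6 : ¬ j+1 < n := by omega
      simp [subst, a5, a6]
    · have a1 : n ≠ k := by omega
      rcases lt_trichotomy n (j+1) with h2 | h2 | h2
      · have a3 : n - 1 ≠ j := by omega
        have a4 : ¬ j < n - 1 := by omega
        have a5 : n ≠ j+1 := by omega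
        have a6 : ¬ j+1 < n := by omega
        simp [subst, a1, h1, a3, a4, a5, a6]
      · subst h2
        simp [subst, a1, h1, subst_lift]
      · have a3 : n - 1 ≠ j := by omega
        have a4 : j < n - 1 := by omega
        have a5 : n ≠ j+1 := by omega
        have a7 : n - 1 ≠ k := by omega
        have a8 : k < n - 1 := by omega
        simp [subst, a1, h1, a3, a4, a5, h2, a7, a8]
  | lam M ih =>
    intro k j N L h
    simp [subst, ih (k+1) (j+1) _ _ (by omega), lift_lift L 0 k (by omega),
      lift_subst1 N 0 j L (by omega)]
  | app M N ih1 ih2 => intro k j N L h; simp [subst, ih1 k j _ _ h, ih2 k j _ _ h]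
  | oplus M N ih1 ih2 => intro k j N L h; simp [subst, ih1 k j _ _ h, ih2 k j _ _ h]

end PTm

open PTm Relation

theorem IsValue.lift {V : PTm} (h : IsValue V) (k : ℕ) : IsValue (V.lift k) := by
  cases h with
  | var n => simp only [PTm.lift]; split_ifs <;> constructor
  | lam M => exact IsValue.lam _

theorem IsValue.subst {V U : PTm} (h : IsValue V) (k : ℕ) (hU : IsValue U) :
    IsValue (V.subst k U) := by
  cases h with
  | var n => simp only [PTm.subst]; split_ifs <;> first | assumption | constructor
  | lam M => exact IsValue.lam _

theorem WeakBv.lift {M M' : PTm} (h : WeakBv M M') : ∀ k, WeakBv (M.lift k) (M'.lift k) := by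
  induction h with
  | beta hV =>
    intro k
    rw [lift_subst2 _ _ _ _ (Nat.zero_le k)]
    exact WeakBv.beta (hV.lift k)
  | appL _ ih => intro k; exact WeakBv.appL (ih k)
  | appR _ ih => intro k; exact WeakBv.appR (ih k)

theorem WeakBv.subst {M M' U : PTm} (hU : IsValue U) (h : WeakBv M M') :
    ∀ k, WeakBv (M.subst k U) (M'.subst k U) := by
  induction h with
  | beta hV =>
    intro k
    rw [subst_subst _ _ _ _ _ (Nat.zero_le k)]
    exact WeakBv.beta (hV.subst k hU)
  | appL _ ih => intro k; exact WeakBv.appL (ih k)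
  | appR _ ih => intro k; exact WeakBv.appR (ih k)

theorem WeakBv.full {M M' : PTm} (h : WeakBv M M') : FullBv M M' := by
  induction h with
  | beta hV => exact FullBv.beta hV
  | appL _ ih => exact FullBv.appL ih
  | appR _ ih => exact FullBv.appR ih

/-- Non-weak occurrences of βv-steps. -/
inductive NW : PTm → PTm → Prop
  | lam {M M'} : FullBv M M' → NW (PTm.lam M) (PTm.lam M')
  | appL {M M' N} : NW M M' → NW (PTm.app M N) (PTm.app M' N)
  | appR {M N N'} : NW N N' → NW (PTm.app M N) (PTm.app M N')
  | oplusL {M M' N} : FullBv M M' → NW (PTm.oplus M N) (PTm.oplus M' N)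
  | oplusR {M N N'} : FullBv N N' → NW (PTm.oplus M N) (PTm.oplus M N')

theorem NW.full {M M' : PTm} (h : NW M M') : FullBv M M' := by
  induction h with
  | lam h => exact FullBv.lam h
  | appL _ ih => exact FullBv.appL ih
  | appR _ ih => exact FullBv.appR ih
  | oplusL h => exact FullBv.oplusL h
  | oplusR h => exact FullBv.oplusR h

theorem FullBv.cases_weak {M M' : PTm} (h : FullBv M M') : WeakBv M M' ∨ NW M M' := by
  induction h with
  | beta hV => exact Or.inl (WeakBv.beta hV)
  | lam h _ => exact Or.inr (NW.lam h)
  | appL _ ih => exact ih.imp WeakBv.appL NW.appL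
  | appR _ ih => exact ih.imp WeakBv.appR NW.appR
  | oplusL h _ => exact Or.inr (NW.oplusL h)
  | oplusR h _ => exact Or.inr (NW.oplusR h)

def IsLam (M : PTm) : Prop := ∃ A, M = PTm.lam A

theorem NW.isLam {M M' : PTm} (h : NW M M') : IsLam M ↔ IsLam M' := by
  cases h <;> simp [IsLam]

theorem NW.isValue {M M' : PTm} (h : NW M M') : IsValue M ↔ IsValue M' := by
  cases h
  case lam => exact ⟨fun _ => IsValue.lam _, fun _ => IsValue.lam _⟩
  all_goals exact ⟨fun h => (by cases h), fun h => (by cases h)⟩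

def HasW (M : PTm) : Prop := ∃ N, WeakBv M N
def HasO (M : PTm) : Prop := ∃ N N', OplusRed M N N'

theorem hasW_app {P Q : PTm} :
    HasW (PTm.app P Q) ↔ (IsLam P ∧ IsValue Q) ∨ HasW P ∨ HasW Q := by
  constructor
  · rintro ⟨N, h⟩
    cases h with
    | beta hV => exact Or.inl ⟨⟨_, rfl⟩, hV⟩
    | appL h => exact Or.inr (Or.inl ⟨_, h⟩)
    | appR h => exact Or.inr (Or.inr ⟨_, h⟩)
  · rintro (⟨⟨A, rfl⟩, h⟩ | ⟨_, h⟩ | ⟨_, h⟩)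
    · exact ⟨_, WeakBv.beta h⟩
    · exact ⟨_, WeakBv.appL h⟩
    · exact ⟨_, WeakBv.appR h⟩

theorem hasO_app {P Q : PTm} : HasO (PTm.app P Q) ↔ HasO P ∨ HasO Q := by
  constructor
  · rintro ⟨N, N', h⟩
    cases h with
    | appL h => exact Or.inl ⟨_, _, h⟩
    | appR h => exact Or.inr ⟨_, _, h⟩
  · rintro (⟨_, _, h⟩ | ⟨_, _, h⟩)
    · exact ⟨_, _, OplusRed.appL h⟩
    · exact ⟨_, _, OplusRed.appR h⟩

theorem not_weak_lam {A N : PTm} : ¬ WeakBv (PTm.lam A) N := by intro h; cases h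
theorem not_weak_oplus {A B N : PTm} : ¬ WeakBv (PTm.oplus A B) N := by intro h; cases h
theorem not_weak_value {V N : PTm} (hV : IsValue V) : ¬ WeakBv V N := by
  intro h; cases hV <;> cases h

theorem NW.hasW {M M' : PTm} (h : NW M M') : HasW M ↔ HasW M' := by
  induction h with
  | lam _ => exact ⟨fun ⟨_, h⟩ => absurd h not_weak_lam, fun ⟨_, h⟩ => absurd h not_weak_lam⟩
  | appL h ih => rw [hasW_app, hasW_app, ih, h.isLam]
  | appR h ih => rw [hasW_app, hasW_app, ih, h.isValue]
  | oplusL _ =>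
    exact ⟨fun ⟨_, h⟩ => absurd h not_weak_oplus, fun ⟨_, h⟩ => absurd h not_weak_oplus⟩
  | oplusR _ =>
    exact ⟨fun ⟨_, h⟩ => absurd h not_weak_oplus, fun ⟨_, h⟩ => absurd h not_weak_oplus⟩

theorem NW.hasO {M M' : PTm} (h : NW M M') : HasO M ↔ HasO M' := by
  induction h with
  | lam _ => exact ⟨fun ⟨_, _, h⟩ => (by cases h), fun ⟨_, _, h⟩ => (by cases h)⟩
  | appL h ih => rw [hasO_app, hasO_app, ih]
  | appR h ih => rw [hasO_app, hasO_app, ih]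
  | oplusL _ => exact ⟨fun _ => ⟨_, _, OplusRed.root _ _⟩, fun _ => ⟨_, _, OplusRed.root _ _⟩⟩
  | oplusR _ => exact ⟨fun _ => ⟨_, _, OplusRed.root _ _⟩, fun _ => ⟨_, _, OplusRed.root _ _⟩⟩

theorem surfNormal_iff {M : PTm} : SurfNormal M ↔ ¬ HasW M ∧ ¬ HasO M := by
  constructor
  · intro h
    exact ⟨fun ⟨_, h'⟩ => h _ (SStep.bv h'), fun ⟨_, _, h'⟩ => h _ (SStep.oplus h')⟩
  · rintro ⟨h1, h2⟩ m h
    cases h with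
    | bv h => exact h1 ⟨_, h⟩
    | oplus h => exact h2 ⟨_, _, h⟩

theorem NW.surfNormal {M M' : PTm} (h : NW M M') : SurfNormal M ↔ SurfNormal M' := by
  rw [surfNormal_iff, surfNormal_iff, h.hasW, h.hasO]

/-- Counted weak reduction. -/
inductive WN : ℕ → PTm → PTm → Prop
  | zero (M) : WN 0 M M
  | succ {n M P N} : WeakBv M P → WN n P N → WN (n+1) M N

theorem WN.trans {a b M P N} (h : WN a M P) (h' : WN b P N) : WN (a+b) M N := by
  induction h with
  | zero => simpa using h'
  | succ h _ ih => rw [Nat.add_right_comm]; exact WN.succ h (ih h')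

theorem WN.lift {a M N} (h : WN a M N) (k) : WN a (M.lift k) (N.lift k) := by
  induction h with
  | zero => exact WN.zero _
  | succ h _ ih => exact WN.succ (h.lift k) ih

theorem WN.subst {a M N U} (hU : IsValue U) (h : WN a M N) (k) :
    WN a (M.subst k U) (N.subst k U) := by
  induction h with
  | zero => exact WN.zero _
  | succ h _ ih => exact WN.succ (h.subst hU k) ih

theorem WN.appL {a M N Q} (h : WN a M N) : WN a (PTm.app M Q) (PTm.app N Q) := by
  induction h with
  | zero => exact WN.zero _
  | succ h _ ih => exact WN.succ (WeakBv.appL h) ih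

theorem WN.appR {a M N Q} (h : WN a M N) : WN a (PTm.app Q M) (PTm.app Q N) := by
  induction h with
  | zero => exact WN.zero _
  | succ h _ ih => exact WN.succ (WeakBv.appR h) ih

theorem WN.star {a M N} (h : WN a M N) : ReflTransGen WeakBv M N := by
  induction h with
  | zero => exact .refl
  | succ h _ ih => exact .head h ih

/-- Internal standard reductions, counting all steps. -/
inductive IS : ℕ → PTm → PTm → Prop
  | var (n) : IS 0 (PTm.var n) (PTm.var n)
  | lam {a b A A1 B} : WN a A A1 → IS b A1 B → IS (a+b) (PTm.lam A) (PTm.lam B)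
  | app {a b P P' Q Q'} : IS a P P' → IS b Q Q' → IS (a+b) (PTm.app P Q) (PTm.app P' Q')
  | oplus {a b c d P P1 P' Q Q1 Q'} : WN a P P1 → IS b P1 P' → WN c Q Q1 → IS d Q1 Q' →
      IS (a+b+(c+d)) (PTm.oplus P Q) (PTm.oplus P' Q')

/-- Standard reductions. -/
def Std (n : ℕ) (M N : PTm) : Prop := ∃ a b P, n = a + b ∧ WN a M P ∧ IS b P N

theorem IS.std {b P N} (h : IS b P N) : Std b P N := ⟨0, b, P, by omega, WN.zero _, h⟩

theorem IS.refl (M : PTm) : IS 0 M M := by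
  induction M with
  | var n => exact IS.var n
  | lam M ih => exact IS.lam (WN.zero _) ih
  | app M N ih1 ih2 => exact IS.app ih1 ih2
  | oplus M N ih1 ih2 => exact IS.oplus (WN.zero _) ih1 (WN.zero _) ih2

theorem WN.std {a b M P N} (h : WN a M P) (h' : Std b P N) : Std (a+b) M N := by
  obtain ⟨c, d, Q, rfl, h1, h2⟩ := h'
  exact ⟨a+c, d, Q, by omega, h.trans h1, h2⟩

theorem Std.lam {n A B} (h : Std n A B) : IS n (PTm.lam A) (PTm.lam B) := by
  obtain ⟨a, b, P, rfl, h1, h2⟩ := h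
  exact IS.lam h1 h2

theorem Std.oplus {n m A B C D} (h : Std n A B) (h' : Std m C D) :
    IS (n+m) (PTm.oplus A C) (PTm.oplus B D) := by
  obtain ⟨a, b, P, rfl, h1, h2⟩ := h
  obtain ⟨a', b', P', rfl, h1', h2'⟩ := h'
  exact IS.oplus h1 h2 h1' h2'

theorem Std.app {n m A B C D} (h : Std n A B) (h' : Std m C D) :
    Std (n+m) (PTm.app A C) (PTm.app B D) := by
  obtain ⟨a, b, P, rfl, h1, h2⟩ := h
  obtain ⟨a', b', P', rfl, h1', h2'⟩ := h'
  exact ⟨a+a', b+b', _, by omega, h1.appL.trans h1'.appR, IS.app h2 h2'⟩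

theorem IS.lam_inv {n A N} (h : IS n (PTm.lam A) N) : ∃ B, N = PTm.lam B ∧ Std n A B := by
  cases h with
  | lam h1 h2 => exact ⟨_, rfl, _, _, _, rfl, h1, h2⟩

theorem IS.isValue {n P N} (h : IS n P N) : IsValue P ↔ IsValue N := by
  cases h
  case lam => exact ⟨fun _ => IsValue.lam _, fun _ => IsValue.lam _⟩
  case var => exact Iff.rfl
  all_goals exact ⟨fun h => (by cases h), fun h => (by cases h)⟩

theorem IS.lift {n P N} (h : IS n P N) : ∀ k, IS n (P.lift k) (N.lift k) := by
  induction h with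
  | var n => intro k; exact IS.refl _
  | lam h _ ih => intro k; exact IS.lam (h.lift _) (ih _)
  | app _ _ ih1 ih2 => intro k; exact IS.app (ih1 _) (ih2 _)
  | oplus h _ h' _ ih1 ih2 => intro k; exact IS.oplus (h.lift _) (ih1 _) (h'.lift _) (ih2 _)

theorem IS.subst {n P N} (h : IS n P N) : ∀ {m k V U}, IsValue V → IS m V U →
    ∃ n', IS n' (P.subst k V) (N.subst k U) := by
  induction h with
  | var n =>
    intro m k V U hV hVU
    simp only [PTm.subst]
    split_ifs
    · exact ⟨_, hVU⟩
    · exact ⟨_, IS.refl _⟩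
    · exact ⟨_, IS.refl _⟩
  | lam h _ ih =>
    intro m k V U hV hVU
    obtain ⟨_, h'⟩ := ih (k := k+1) (hV.lift 0) (hVU.lift 0)
    exact ⟨_, IS.lam (h.subst (hV.lift 0) _) h'⟩
  | app _ _ ih1 ih2 =>
    intro m k V U hV hVU
    obtain ⟨_, h1⟩ := ih1 (k := k) hV hVU
    obtain ⟨_, h2⟩ := ih2 (k := k) hV hVU
    exact ⟨_, IS.app h1 h2⟩
  | oplus h _ h' _ ih1 ih2 =>
    intro m k V U hV hVU
    obtain ⟨_, h1⟩ := ih1 (k := k) hV hVU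
    obtain ⟨_, h2⟩ := ih2 (k := k) hV hVU
    exact ⟨_, IS.oplus (h.subst hV _) h1 (h'.subst hV _) h2⟩

theorem std_full {N N' : PTm} (h : FullBv N N') : ∀ {n P}, IS n P N → ∃ m, Std m P N' := by
  induction h with
  | beta hV =>
    intro n P hP
    cases hP with
    | app h1 h2 =>
      cases h1 with
      | lam h3 h4 =>
        have hV0 := h2.isValue.2 hV
        obtain ⟨_, h5⟩ := h4.subst (k := 0) hV0 h2
        exact ⟨_, WN.std (WN.succ (WeakBv.beta hV0) (h3.subst hV0 0)) h5.std⟩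
  | lam _ ih =>
    intro n P hP
    cases hP with
    | lam h1 h2 =>
      obtain ⟨_, h⟩ := ih h2
      exact ⟨_, (h1.std h).lam.std⟩
  | appL _ ih =>
    intro n P hP
    cases hP with
    | app h1 h2 =>
      obtain ⟨_, h⟩ := ih h1
      exact ⟨_, h.app h2.std⟩
  | appR _ ih =>
    intro n P hP
    cases hP with
    | app h1 h2 =>
      obtain ⟨_, h⟩ := ih h2
      exact ⟨_, h1.std.app h⟩
  | oplusL _ ih =>
    intro n P hP
    cases hP with
    | oplus h1 h2 h3 h4 =>
      obtain ⟨_, h⟩ := ih h2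
      exact ⟨_, ((h1.std h).oplus (h3.std h4.std)).std⟩
  | oplusR _ ih =>
    intro n P hP
    cases hP with
    | oplus h1 h2 h3 h4 =>
      obtain ⟨_, h⟩ := ih h4
      exact ⟨_, ((h1.std h2.std).oplus (h3.std h)).std⟩

/-- Strict (non-loop) chains. -/
def SNW (M N : PTm) : Prop := NW M N ∧ M ≠ N
def SFull (M N : PTm) : Prop := FullBv M N ∧ M ≠ N

theorem chain_map {r s : PTm → PTm → Prop} (f : PTm → PTm)
    (h : ∀ a b, r a b → s (f a) (f b)) {a b} (hab : ReflTransGen r a b) :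
    ReflTransGen s (f a) (f b) := by
  induction hab with
  | refl => exact ReflTransGen.refl
  | tail _ h1 ih => exact ih.tail (h _ _ h1)

theorem chain_mono {r s : PTm → PTm → Prop} (h : ∀ a b, r a b → s a b) {a b}
    (hab : ReflTransGen r a b) : ReflTransGen s a b := by
  induction hab with
  | refl => exact ReflTransGen.refl
  | tail _ h1 ih => exact ih.tail (h _ _ h1)

theorem WN.sfull {a M N} (h : WN a M N) : ReflTransGen SFull M N := by
  induction h with
  | zero => exact .refl
  | @succ n M P N h _ ih =>
    by_cases e : M = P
    · rw [e]; exact ih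
    · exact .head ⟨h.full, e⟩ ih

theorem SNW.sfull {M N} (h : SNW M N) : SFull M N := ⟨h.1.full, h.2⟩

theorem IS.chain {n P N} (h : IS n P N) : ReflTransGen SNW P N := by
  induction h with
  | var n => exact .refl
  | lam h _ ih =>
    refine chain_map (r := SFull) PTm.lam (fun a b h => ⟨NW.lam h.1, by simpa using h.2⟩) ?_
    exact h.sfull.trans (chain_mono (fun _ _ => SNW.sfull) ih)
  | @app a b P P' Q Q' _ _ ih1 ih2 =>
    refine ReflTransGen.trans (b := PTm.app P' Q) ?_ ?_
    · exact chain_map (fun x => PTm.app x Q)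
        (fun a b h => ⟨NW.appL h.1, by simpa using h.2⟩) ih1
    · exact chain_map (fun x => PTm.app P' x)
        (fun a b h => ⟨NW.appR h.1, by simpa using h.2⟩) ih2
  | @oplus a b c d P P1 P' Q Q1 Q' h1 _ h2 _ ih1 ih2 =>
    refine ReflTransGen.trans (b := PTm.oplus P' Q) ?_ ?_
    · exact chain_map (r := SFull) (fun x => PTm.oplus x Q)
        (fun a b h => ⟨NW.oplusL h.1, by simpa using h.2⟩)
        (h1.sfull.trans (chain_mono (fun _ _ => SNW.sfull) ih1))
    · exact chain_map (r := SFull) (fun x => PTm.oplus P' x)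
        (fun a b h => ⟨NW.oplusR h.1, by simpa using h.2⟩)
        (h2.sfull.trans (chain_mono (fun _ _ => SNW.sfull) ih2))

theorem Std.chain {n P N} (h : Std n P N) : ReflTransGen SFull P N := by
  obtain ⟨a, b, Q, rfl, h1, h2⟩ := h
  exact h1.sfull.trans (chain_mono (fun _ _ => SNW.sfull) h2.chain)

/-- Chains restricted by an invariant. -/
theorem chain_inv {r s : PTm → PTm → Prop} {p : PTm → Prop}
    (h : ∀ a b, p a → r a b → p b ∧ s a b) {a b} (hab : ReflTransGen r a b) (ha : p a) :
    ReflTransGen s a b ∧ p b := by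
  induction hab with
  | refl => exact ⟨.refl, ha⟩
  | tail _ hbc ih =>
    obtain ⟨h1, h2⟩ := ih
    obtain ⟨h3, h4⟩ := h _ _ h2 hbc
    exact ⟨h1.tail h4, h3⟩

/-! ### Syntactic accidents -/

theorem acc_G : ∀ (s : ℕ) (C : PTm), sizeOf C < s → ∀ (k : ℕ) (V W U : PTm), V = W.lift k →
    IsValue V → C.subst (k+1) V ≠ PTm.app (PTm.lam C) U := by
  intro s
  induction s with
  | zero => intro C hC; omega
  | succ s ih =>
    intro C hC k V W U hVW hV h
    cases C with
    | var i =>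
      simp only [PTm.subst] at h
      split_ifs at h
      subst h; cases hV
    | lam C => simp [PTm.subst] at h
    | oplus C D => simp [PTm.subst] at h
    | app C1 C2 =>
      simp only [PTm.subst, PTm.app.injEq] at h
      obtain ⟨h1, h2⟩ := h
      cases C1 with
      | var i =>
        simp only [PTm.subst] at h1
        split_ifs at h1 with hi
        subst hi
        rw [hVW] at h1
        cases W with
        | var n => simp only [PTm.lift] at h1; split_ifs at h1
        | app _ _ => simp [PTm.lift] at h1
        | oplus _ _ => simp [PTm.lift] at h1
        | lam W =>
          simp only [PTm.lift, PTm.lam.injEq] at h1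
          cases W with
          | var n => simp only [PTm.lift] at h1; split_ifs at h1
          | lam _ => simp [PTm.lift] at h1
          | oplus _ _ => simp [PTm.lift] at h1
          | app W1 W2 =>
            simp only [PTm.lift, PTm.app.injEq] at h1
            obtain ⟨h1, _⟩ := h1
            cases W1 with
            | var n =>
              simp only [PTm.lift] at h1
              split_ifs at h1 <;> simp at h1 <;> omega
            | lam _ => simp [PTm.lift] at h1
            | oplus _ _ => simp [PTm.lift] at h1
            | app _ _ => simp [PTm.lift] at h1
      | lam D =>
        simp only [PTm.subst, PTm.lam.injEq] at h1
        refine ih D ?_ (k+1) (V.lift 0) (W.lift 0) C2 ?_ (hV.lift 0) h1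
        · simp at hC; omega
        · rw [hVW, lift_lift _ _ _ (Nat.zero_le k)]
      | app _ _ => simp [PTm.subst] at h1
      | oplus _ _ => simp [PTm.subst] at h1

theorem acc_T : ∀ (s : ℕ) (T T' : PTm), sizeOf T < s → ∀ (k : ℕ) (V : PTm), IsValue V →
    FullBv T T' → T.subst k V ≠ PTm.lam (PTm.app (PTm.var 0) T') := by
  intro s
  induction s with
  | zero => intro T T' hT; omega
  | succ s ih =>
    intro T T' hT k V hV hTT h
    cases T with
    | var i => cases hTT
    | app _ _ => simp [PTm.subst] at h
    | oplus _ _ => simp [PTm.subst] at h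
    | lam C =>
      cases hTT with
      | @lam _ C' hC =>
        simp only [PTm.subst, PTm.lam.injEq] at h
        cases C with
        | var i => cases hC
        | lam _ => simp [PTm.subst] at h
        | oplus _ _ => simp [PTm.subst] at h
        | app C1 C2 =>
          simp only [PTm.subst, PTm.app.injEq] at h
          obtain ⟨h1, h2⟩ := h
          cases C1 with
          | lam _ => simp [PTm.subst] at h1
          | oplus _ _ => simp [PTm.subst] at h1
          | app _ _ => simp [PTm.subst] at h1
          | var i =>
            have hi : i = 0 := by
              simp only [PTm.subst] at h1
              split_ifs at h1 with h3 h4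
              · cases hV with
                | var n =>
                  simp only [PTm.lift] at h1; split_ifs at h1 <;> simp at h1 <;> omega
                | lam _ => simp [PTm.lift] at h1
              · simp at h1; omega
              · simpa using h1
            subst hi
            cases hC with
            | appL h => cases h
            | @appR _ _ C2' h =>
              refine ih C2 C2' ?_ (k+1) (V.lift 0) (hV.lift 0) h h2
              simp at hT; omega

/-- `L2`: no accident in the argument of a redex. -/
theorem acc_arg {A V V' : PTm} (hV : IsValue V) (h : FullBv V V') :
    A.subst 0 V ≠ PTm.app (PTm.lam A) V' := by
  intro e
  cases A with
  | var i =>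
    simp only [PTm.subst] at e
    split_ifs at e
    subst e; cases hV
  | lam C => simp [PTm.subst] at e
  | oplus C D => simp [PTm.subst] at e
  | app B1 B2 =>
    simp only [PTm.subst, PTm.app.injEq] at e
    obtain ⟨h1, h2⟩ := e
    cases B1 with
    | lam C =>
      simp only [PTm.subst, PTm.lam.injEq] at h1
      exact acc_G _ C (Nat.lt_succ_self _) 0 (V.lift 0) V B2 rfl (hV.lift 0) h1
    | app _ _ => simp [PTm.subst] at h1
    | oplus _ _ => simp [PTm.subst] at h1
    | var i =>
      simp only [PTm.subst] at h1
      split_ifs at h1 with hi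
      subst hi
      subst h1
      cases h with
      | lam h =>
        cases h with
        | appL h => cases h
        | appR h => exact acc_T _ _ _ (Nat.lt_succ_self _) 0 _ hV h h2

def Avoid (k : ℕ) (V U Q Q' : PTm) : Prop :=
  FullBv Q Q' ∧ Q ≠ Q' ∧ Q.subst k V ≠ PTm.app (PTm.lam Q') U

def Concl (k : ℕ) (V U : PTm) (n : ℕ) (A N : PTm) : Prop :=
  ReflTransGen (Avoid k V U) A N ∨
    ∃ a c Y, WN a (A.subst k V) (PTm.app (PTm.lam Y) U) ∧ Std c Y N ∧ a + c < n

def Hyp (k : ℕ) (V U : PTm) : Prop :=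
  IsValue V ∧ ((k = 0 ∧ U = V) ∨ ∃ j W, k = j + 1 ∧ V = PTm.lift j W)

theorem Hyp.succ {k V U} (h : Hyp k V U) : ∃ W, PTm.lift 0 V = PTm.lift k W := by
  obtain ⟨_, ⟨rfl, _⟩ | ⟨j, W, rfl, rfl⟩⟩ := h
  · exact ⟨V, rfl⟩
  · exact ⟨W.lift 0, lift_lift _ _ _ (Nat.zero_le j)⟩

theorem concl_weak {k V U a b A A1 N} (hV : IsValue V) (h : WN a A A1) (hI : IS b A1 N)
    (hc : Concl k V U b A1 N) : Concl k V U (a+b) A N := by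
  induction h with
  | zero => simpa using hc
  | @succ n M P N' hMP hPN ih =>
    have ih := ih hI hc
    by_cases e : M = P
    · subst e
      rcases ih with h | ⟨a, c, Y, h1, h2, h3⟩
      · exact Or.inl h
      · exact Or.inr ⟨a, c, Y, h1, h2, by omega⟩
    · by_cases e2 : M.subst k V = PTm.app (PTm.lam P) U
      · refine Or.inr ⟨0, n + b, P, ?_, hPN.std hI.std, by omega⟩
        rw [e2]; exact WN.zero _
      · rcases ih with h | ⟨a, c, Y, h1, h2, h3⟩
        · exact Or.inl (.head ⟨hMP.full, e, e2⟩ h)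
        · exact Or.inr ⟨a+1, c, Y, WN.succ (hMP.subst hV k) h1, h2, by omega⟩

theorem subst_ne_lam {X A V : PTm} {k} (h1 : ¬ IsValue X) : X.subst k V ≠ PTm.lam A := by
  cases X with
  | var i => exact absurd (IsValue.var i) h1
  | lam i => exact absurd (IsValue.lam i) h1
  | app _ _ => simp [PTm.subst]
  | oplus _ _ => simp [PTm.subst]

theorem claimI : ∀ (s n : ℕ) (P N : PTm) (k : ℕ) (V U : PTm), sizeOf N < s → Hyp k V U →
    IS n P N → Concl k V U n P N := by
  intro s
  induction s with
  | zero => intro _ _ _ _ _ _ h; omega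
  | succ s ih =>
    intro n P N k V U hs hyp hI
    have hV := hyp.1
    have hchain := hI.chain
    cases P with
    | var i => cases hI; exact Or.inl .refl
    | lam C =>
      left
      refine (chain_inv (p := IsLam) ?_ hchain ⟨_, rfl⟩).1
      rintro _ b ⟨a, rfl⟩ ⟨h1, h2⟩
      refine ⟨h1.isLam.1 ⟨_, rfl⟩, h1.full, h2, ?_⟩
      simp [PTm.subst]
    | oplus C D =>
      left
      refine (chain_inv (p := fun x => ∃ c d, x = PTm.oplus c d) ?_ hchain ⟨_, _, rfl⟩).1
      rintro _ b ⟨c, d, rfl⟩ ⟨h1, h2⟩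
      refine ⟨?_, h1.full, h2, ?_⟩
      · cases h1 <;> exact ⟨_, _, rfl⟩
      · simp [PTm.subst]
    | app B1 B2 =>
      by_cases hB : IsValue B1
      · cases hI with
        | @app n1 n2 _ N1 _ N2 hI1 hI2 =>
        cases hB with
        | var i =>
          cases hI1
          left
          refine chain_map (fun x => PTm.app (PTm.var i) x) ?_ hI2.chain
          rintro a b ⟨h1, h2⟩
          refine ⟨FullBv.appR h1.full, by simpa using h2, ?_⟩
          intro e
          simp only [PTm.subst, PTm.app.injEq] at e
          obtain ⟨e1, e2⟩ := e
          split_ifs at e1 with hi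
          subst hi
          obtain ⟨_, ⟨rfl, hU⟩ | ⟨j, W, rfl, hW⟩⟩ := hyp
          · subst hU
            subst e1
            exact acc_T _ _ _ (Nat.lt_succ_self _) 0 _ hV h1.full e2
          · refine acc_G _ (PTm.app (PTm.var (j+1)) b) (Nat.lt_succ_self _) j V W
              (b.subst (j+1) V) hW hV ?_
            simp [PTm.subst, e1]
        | lam C =>
          obtain ⟨N1', rfl, a, b, C1, rfl, hW, hC⟩ := hI1.lam_inv
          obtain ⟨W, hVW⟩ := hyp.succ
          -- argument chain
          have harg : ReflTransGen (Avoid k V U) (PTm.app (PTm.lam N1') B2)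
              (PTm.app (PTm.lam N1') N2) := by
            refine chain_map (fun x => PTm.app (PTm.lam N1') x) ?_ hI2.chain
            rintro x y ⟨h1, h2⟩
            refine ⟨FullBv.appR h1.full, by simpa using h2, ?_⟩
            intro e
            simp only [PTm.subst, PTm.app.injEq, PTm.lam.injEq] at e
            exact acc_G _ N1' (Nat.lt_succ_self _) k _ W _ hVW (hV.lift 0) e.1
          by_cases hU : B2.subst k V = U
          · have hc := concl_weak (hV.lift 0) hW hC
              (ih b C1 N1' (k+1) (V.lift 0) B2 (by simp at hs; omega)
                ⟨hV.lift 0, Or.inr ⟨k, W, rfl, hVW⟩⟩ hC)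
            rcases hc with h | ⟨a', c', Y, h1, h2, h3⟩
            · left
              refine ReflTransGen.trans ?_ harg
              refine chain_map (fun x => PTm.app (PTm.lam x) B2) ?_ h
              rintro x y ⟨h1, h2, h3⟩
              refine ⟨FullBv.appL (FullBv.lam h1), by simpa using h2, ?_⟩
              intro e
              simp only [PTm.subst, PTm.app.injEq, PTm.lam.injEq] at e
              exact h3 e.1
            · right
              refine ⟨0, a' + (c' + n2), C.subst (k+1) (V.lift 0), ?_, ?_, by omega⟩
              · rw [← hU]; exact WN.zero _
              · exact h1.std (h2.lam.app hI2).std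
          · left
            refine ReflTransGen.trans ?_ harg
            refine chain_map (r := SFull) (fun x => PTm.app (PTm.lam x) B2) ?_
              (Std.chain ⟨a, b, C1, rfl, hW, hC⟩)
            rintro x y ⟨h1, h2⟩
            refine ⟨FullBv.appL (FullBv.lam h1), by simpa using h2, ?_⟩
            intro e
            simp only [PTm.subst, PTm.app.injEq, PTm.lam.injEq] at e
            exact hU e.2
      · left
        refine (chain_inv (p := fun x => ∃ c d, x = PTm.app c d ∧ ¬ IsValue c) ?_ hchain
          ⟨_, _, rfl, hB⟩).1
        rintro _ y ⟨c, d, rfl, hc⟩ ⟨h1, h2⟩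
        refine ⟨?_, h1.full, h2, ?_⟩
        · cases h1 with
          | appL h => exact ⟨_, _, rfl, fun h' => hc (h.isValue.2 h')⟩
          | appR h => exact ⟨_, _, rfl, hc⟩
        · intro e
          simp only [PTm.subst, PTm.app.injEq] at e
          exact subst_ne_lam hc e.1

/-- Strict non-weak steps that do not coincide with a weak step. -/
def SI (M N : PTm) : Prop := NW M N ∧ M ≠ N ∧ ¬ WeakBv M N

theorem claimW {n P N} (h : IS n P N) : ReflTransGen SI P N ∨
    ∃ P' m, ReflTransGen WeakBv P P' ∧ Std m P' N ∧ m < n := by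
  induction h with
  | var n => exact Or.inl .refl
  | @lam a b A A1 B h1 h2 _ =>
    left
    refine (chain_inv (p := IsLam) ?_ (IS.lam h1 h2).chain ⟨_, rfl⟩).1
    rintro _ y ⟨x, rfl⟩ ⟨h1, h2⟩
    exact ⟨h1.isLam.1 ⟨_, rfl⟩, h1, h2, not_weak_lam⟩
  | @oplus a b c d P P1 P' Q Q1 Q' h1 h2 h3 h4 _ _ =>
    left
    refine (chain_inv (p := fun x => ∃ c d, x = PTm.oplus c d) ?_
      (IS.oplus h1 h2 h3 h4).chain ⟨_, _, rfl⟩).1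
    rintro _ b ⟨c, d, rfl⟩ ⟨h1, h2⟩
    refine ⟨?_, h1, h2, not_weak_oplus⟩
    cases h1 <;> exact ⟨_, _, rfl⟩
  | @app a b P P' Q Q' hP hQ ih1 ih2 =>
    rcases ih1 with ih1 | ⟨P2, m, h1, h2, h3⟩
    swap
    · right
      refine ⟨PTm.app P2 Q, m + b, ?_, h2.app hQ.std, by omega⟩
      exact chain_map (fun x => PTm.app x Q) (fun _ _ h => WeakBv.appL h) h1
    rcases ih2 with ih2 | ⟨Q2, m, h1, h2, h3⟩
    swap
    · right
      refine ⟨PTm.app P Q2, a + m, ?_, hP.std.app h2, by omega⟩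
      exact chain_map (fun x => PTm.app P x) (fun _ _ h => WeakBv.appR h) h1
    by_cases hr : IsLam P ∧ IsValue Q
    · obtain ⟨⟨A, rfl⟩, hV⟩ := hr
      obtain ⟨B, rfl, c, d, A1, rfl, hW, hA⟩ := hP.lam_inv
      have hc := concl_weak (k := 0) (V := Q) (U := Q) hV hW hA
        (claimI _ d A1 B 0 Q Q (Nat.lt_succ_self _) ⟨hV, Or.inl ⟨rfl, rfl⟩⟩ hA)
      rcases hc with h | ⟨a', c', Y, h1, h2, h3⟩
      · left
        refine ReflTransGen.trans (b := PTm.app (PTm.lam B) Q) ?_ ?_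
        · refine chain_map (fun x => PTm.app (PTm.lam x) Q) ?_ h
          rintro x y ⟨h1, h2, h3⟩
          refine ⟨NW.appL (NW.lam h1), by simpa using h2, ?_⟩
          intro hw
          generalize he : PTm.app (PTm.lam y) Q = Z at hw
          cases hw with
          | beta _ => exact h3 he.symm
          | appL h => exact not_weak_lam h
          | appR h => exact not_weak_value hV h
        · have hinv := chain_inv (r := SI) (p := IsValue)
            (s := fun x y => SI (PTm.app (PTm.lam B) x) (PTm.app (PTm.lam B) y)) ?_ ih2 hV
          · exact chain_map (fun x => PTm.app (PTm.lam B) x) (fun _ _ h => h) hinv.1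
          · rintro x y hx ⟨h1, h2, h3⟩
            refine ⟨h1.isValue.1 hx, NW.appR h1, by simpa using h2, ?_⟩
            intro hw
            generalize he : PTm.app (PTm.lam B) y = Z at hw
            cases hw with
            | beta _ => exact acc_arg hx h1.full he.symm
            | appL h => exact not_weak_lam h
            | appR h => exact not_weak_value hx h
      · right
        refine ⟨PTm.app (PTm.lam Y) Q, c' + b, ?_, (h2.lam.app hQ).std, by omega⟩
        exact .head (WeakBv.beta hV) h1.star
    · left
      refine ReflTransGen.trans (b := PTm.app P' Q) ?_ ?_
      · have hinv := chain_inv (r := SI) (p := fun x => ¬ (IsLam x ∧ IsValue Q))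
            (s := fun x y => SI (PTm.app x Q) (PTm.app y Q)) ?_ ih1 hr
        · exact chain_map (fun x => PTm.app x Q) (fun _ _ h => h) hinv.1
        · rintro x y hx ⟨h1, h2, h3⟩
          refine ⟨by rwa [← h1.isLam], NW.appL h1, by simpa using h2, ?_⟩
          intro hw
          generalize he : PTm.app y Q = Z at hw
          cases hw with
          | beta hv => exact hx ⟨⟨_, rfl⟩, hv⟩
          | appL h => cases he; exact h3 h
          | appR h => cases he; exact h2 rfl
      · have hr' : ¬ (IsLam P' ∧ IsValue Q) := by
          have := chain_inv (r := SI) (p := fun x => ¬ (IsLam x ∧ IsValue Q))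
            (s := fun _ _ => True) ?_ ih1 hr
          · exact this.2
          · rintro x y hx ⟨h1, h2, h3⟩
            exact ⟨by rwa [← h1.isLam], trivial⟩
        have hinv := chain_inv (r := SI) (p := fun x => ¬ (IsLam P' ∧ IsValue x))
            (s := fun x y => SI (PTm.app P' x) (PTm.app P' y)) ?_ ih2 hr'
        · exact chain_map (fun x => PTm.app P' x) (fun _ _ h => h) hinv.1
        · rintro x y hx ⟨h1, h2, h3⟩
          refine ⟨by rwa [← h1.isValue], NW.appR h1, by simpa using h2, ?_⟩
          intro hw
          generalize he : PTm.app P' y = Z at hw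
          cases hw with
          | beta hv => exact hx ⟨⟨_, rfl⟩, hv⟩
          | appL h => cases he; exact h2 rfl
          | appR h => cases he; exact h3 h

/-- Strict steps that do not coincide with an unbiased step. -/
def UI (M N : PTm) : Prop := FullBv M N ∧ M ≠ N ∧ ¬ UnbBv M N

theorem UnbBv.full {M N} (h : UnbBv M N) : FullBv M N := by
  induction h with
  | weak h => exact h.full
  | lam _ _ ih => exact FullBv.lam ih
  | appL _ _ ih => exact FullBv.appL ih
  | appR _ _ ih => exact FullBv.appR ih
  | oplusL _ _ ih => exact FullBv.oplusL ih
  | oplusR _ _ ih => exact FullBv.oplusR ih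

theorem FullBv.nw {M N} (h : FullBv M N) (hM : ¬ HasW M) : NW M N :=
  h.cases_weak.resolve_left fun h' => hM ⟨_, h'⟩

theorem hasW_lam {A : PTm} : ¬ HasW (PTm.lam A) := fun ⟨_, h⟩ => not_weak_lam h
theorem hasW_oplus {A B : PTm} : ¬ HasW (PTm.oplus A B) := fun ⟨_, h⟩ => not_weak_oplus h

theorem weakn {M : PTm} (h : ¬ HasW M) : ∀ s, ¬ WeakBv M s := fun s h' => h ⟨s, h'⟩

theorem unb_lam {A A'} (h : UnbBv A A') : UnbBv (PTm.lam A) (PTm.lam A') :=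
  UnbBv.lam (weakn hasW_lam) h

/-- chains under application, where the application has no weak redex -/
theorem app_chain_L {r s : PTm → PTm → Prop} {P P' Q : PTm} (hr : ∀ x y, r x y → FullBv x y)
    (h : ∀ x y, ¬ HasW (PTm.app x Q) → r x y → s (PTm.app x Q) (PTm.app y Q))
    (hc : ReflTransGen r P P') (hP : ¬ HasW (PTm.app P Q)) :
    ReflTransGen s (PTm.app P Q) (PTm.app P' Q) ∧ ¬ HasW (PTm.app P' Q) := by
  induction hc with
  | refl => exact ⟨.refl, hP⟩
  | @tail x y _ hbc ih =>
    obtain ⟨h1, h2⟩ := ih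
    refine ⟨h1.tail (h _ _ h2 hbc), ?_⟩
    have hx : ¬ HasW x := fun hx => h2 (hasW_app.2 (Or.inr (Or.inl hx)))
    have : NW (PTm.app x Q) (PTm.app y Q) := NW.appL ((hr _ _ hbc).nw hx)
    rwa [← this.hasW]

theorem app_chain_R {r s : PTm → PTm → Prop} {P Q Q' : PTm} (hr : ∀ x y, r x y → FullBv x y)
    (h : ∀ x y, ¬ HasW (PTm.app P x) → r x y → s (PTm.app P x) (PTm.app P y))
    (hc : ReflTransGen r Q Q') (hP : ¬ HasW (PTm.app P Q)) :
    ReflTransGen s (PTm.app P Q) (PTm.app P Q') ∧ ¬ HasW (PTm.app P Q') := by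
  induction hc with
  | refl => exact ⟨.refl, hP⟩
  | @tail x y _ hbc ih =>
    obtain ⟨h1, h2⟩ := ih
    refine ⟨h1.tail (h _ _ h2 hbc), ?_⟩
    have hx : ¬ HasW x := fun hx => h2 (hasW_app.2 (Or.inr (Or.inr hx)))
    have : NW (PTm.app P x) (PTm.app P y) := NW.appR ((hr _ _ hbc).nw hx)
    rwa [← this.hasW]

def ConclU (n : ℕ) (P N : PTm) : Prop := ReflTransGen UI P N ∨
    ∃ P' m, ReflTransGen UnbBv P P' ∧ Std m P' N ∧ m < n

theorem conclU_weak {a b A A1 B} (h : WN a A A1) (hI : IS b A1 B) (hc : ConclU b A1 B) :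
    ConclU (a+b) A B := by
  cases h with
  | zero => simpa using hc
  | succ h1 h2 =>
    right
    exact ⟨_, _, .single (UnbBv.weak h1), h2.std hI.std, by omega⟩

theorem claimU {n P N} (h : IS n P N) : ConclU n P N := by
  induction h with
  | var n => exact Or.inl .refl
  | @lam a b A A1 B h1 h2 ih =>
    rcases conclU_weak h1 h2 ih with h | ⟨A', m, h, h', hm⟩
    · left
      refine chain_map PTm.lam ?_ h
      rintro x y ⟨h1, h2, h3⟩
      refine ⟨FullBv.lam h1, by simpa using h2, ?_⟩
      intro hu
      cases hu with
      | weak h => exact not_weak_lam h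
      | lam _ h => exact h3 h
    · right
      exact ⟨_, _, chain_map PTm.lam (fun _ _ => unb_lam) h, h'.lam.std, hm⟩
  | @oplus a b c d P P1 P' Q Q1 Q' h1 h2 h3 h4 ih1 ih2 =>
    rcases conclU_weak h1 h2 ih1 with hL | ⟨A', m, h, h', hm⟩
    swap
    · right
      refine ⟨PTm.oplus A' Q, m + (c + d), ?_, (h'.oplus (h3.std h4.std)).std, by omega⟩
      exact chain_map (fun x => PTm.oplus x Q)
        (fun _ _ h => UnbBv.oplusL (weakn hasW_oplus) h) h
    rcases conclU_weak h3 h4 ih2 with hR | ⟨A', m, h, h', hm⟩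
    swap
    · right
      refine ⟨PTm.oplus P A', a + b + m, ?_, ((h1.std h2.std).oplus h').std, by omega⟩
      exact chain_map (fun x => PTm.oplus P x)
        (fun _ _ h => UnbBv.oplusR (weakn hasW_oplus) h) h
    left
    refine ReflTransGen.trans (b := PTm.oplus P' Q) ?_ ?_
    · refine chain_map (fun x => PTm.oplus x Q) ?_ hL
      rintro x y ⟨h1, h2, h3⟩
      refine ⟨FullBv.oplusL h1, by simpa using h2, ?_⟩
      intro hu
      generalize he : PTm.oplus y Q = Z at hu
      cases hu with
      | weak h => exact not_weak_oplus h
      | oplusL _ h => cases he; exact h3 h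
      | oplusR _ h => cases he; exact h2 rfl
    · refine chain_map (fun x => PTm.oplus P' x) ?_ hR
      rintro x y ⟨h1, h2, h3⟩
      refine ⟨FullBv.oplusR h1, by simpa using h2, ?_⟩
      intro hu
      generalize he : PTm.oplus P' y = Z at hu
      cases hu with
      | weak h => exact not_weak_oplus h
      | oplusL _ h => cases he; exact h2 rfl
      | oplusR _ h => cases he; exact h3 h
  | @app a b P P' Q Q' hP hQ ih1 ih2 =>
    by_cases hw : HasW (PTm.app P Q)
    · rcases claimW (IS.app hP hQ) with h | ⟨R, m, h1, h2, h3⟩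
      · left
        refine (chain_inv (p := HasW) ?_ h hw).1
        rintro x y hx ⟨h1, h2, h3⟩
        refine ⟨h1.hasW.1 hx, h1.full, h2, ?_⟩
        intro hu
        obtain ⟨z, hz⟩ := hx
        cases hu with
        | weak h => exact h3 h
        | lam h _ => exact h _ hz
        | appL h _ => exact h _ hz
        | appR h _ => exact h _ hz
        | oplusL h _ => exact h _ hz
        | oplusR h _ => exact h _ hz
      · right
        exact ⟨R, m, chain_mono (fun _ _ => UnbBv.weak) h1, h2, h3⟩
    · rcases ih1 with hL | ⟨A', m, h, h', hm⟩
      swap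
      · right
        refine ⟨PTm.app A' Q, m + b, ?_, h'.app hQ.std, by omega⟩
        exact (app_chain_L (fun _ _ h => h.full)
          (fun _ _ hw h => UnbBv.appL (weakn hw) h) h hw).1
      rcases ih2 with hR | ⟨A', m, h, h', hm⟩
      swap
      · right
        refine ⟨PTm.app P A', a + m, ?_, hP.std.app h', by omega⟩
        exact (app_chain_R (fun _ _ h => h.full)
          (fun _ _ hw h => UnbBv.appR (weakn hw) h) h hw).1
      left
      have c1 := app_chain_L (r := UI) (s := UI) (Q := Q) (fun _ _ h => h.1) ?_ hL hw
      · have c2 := app_chain_R (r := UI) (s := UI) (P := P') (fun _ _ h => h.1) ?_ hR c1.2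
        · exact c1.1.trans c2.1
        · rintro x y hw ⟨h1, h2, h3⟩
          refine ⟨FullBv.appR h1, by simpa using h2, ?_⟩
          intro hu
          generalize he : PTm.app P' y = Z at hu
          cases hu with
          | weak h => exact hw ⟨_, h⟩
          | appL _ h => cases he; exact h2 rfl
          | appR _ h => cases he; exact h3 h
      · rintro x y hw ⟨h1, h2, h3⟩
        refine ⟨FullBv.appL h1, by simpa using h2, ?_⟩
        intro hu
        generalize he : PTm.app y Q = Z at hu
        cases hu with
        | weak h => exact hw ⟨_, h⟩
        | appL _ h => cases he; exact h3 h
        | appR _ h => cases he; exact h2 rfl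

/-! ### From terms to multi-distributions -/

def E1 (a b : PTm) : Prop := EStep a (single b)
def I1 (a b : PTm) : Prop := IStep a (single b)

theorem single_inj {a b : PTm} (h : single a = single b) : a = b := by
  simpa [single] using h

theorem weak_E1 {a b} (h : WeakBv a b) : E1 a b :=
  EStep.surf (fun hn => hn _ (SStep.bv h)) (SStep.bv h)

theorem WN.e1 {a M N} (h : WN a M N) : ReflTransGen E1 M N := by
  induction h with
  | zero => exact .refl
  | succ h _ ih => exact .head (weak_E1 h) ih

theorem pair_ne_single {p q : NNReal} {A B C : PTm} :
    ({(p, A), (q, B)} : MDist) ≠ single C := by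
  intro h
  have := congrArg Multiset.card h
  simp [single] at this

theorem estep_single {M : PTm} {m : MDist} (h : EStep M m) : ∀ N, m = single N →
    (¬ SurfNormal M ∧ WeakBv M N) ∨ (SurfNormal M ∧ UnbBv M N) := by
  intro N e
  cases h with
  | surf hn h =>
    cases h with
    | bv h => exact Or.inl ⟨hn, single_inj e ▸ h⟩
    | oplus h => exact absurd e pair_ne_single
  | unb hn h => exact Or.inr ⟨hn, single_inj e ▸ h⟩

theorem term_factor : ∀ (n : ℕ) {P N : PTm}, Std n P N →
    ∃ P', ReflTransGen E1 P P' ∧ ReflTransGen I1 P' N := by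
  intro n
  induction n using Nat.strong_induction_on with
  | _ n ih =>
  rintro P N ⟨a, b, Q, rfl, hW, hI⟩
  suffices H : ∃ P', ReflTransGen E1 Q P' ∧ ReflTransGen I1 P' N by
    obtain ⟨P', h1, h2⟩ := H
    exact ⟨P', hW.e1.trans h1, h2⟩
  by_cases hs : SurfNormal Q
  · rcases claimU hI with h | ⟨P', m, h1, h2, hm⟩
    · refine ⟨Q, .refl, (chain_inv (p := SurfNormal) ?_ h hs).1⟩
      rintro x y hx ⟨hf, _, hu⟩
      have hnw : NW x y := hf.nw (surfNormal_iff.1 hx).1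
      refine ⟨hnw.surfNormal.1 hx, Step.bv hf, fun hE => ?_⟩
      rcases estep_single hE _ rfl with h | h
      · exact h.1 hx
      · exact hu h.2
    · obtain ⟨R, hR1, hR2⟩ := ih m (by omega) h2
      refine ⟨R, ReflTransGen.trans ?_ hR1, hR2⟩
      refine (chain_inv (p := SurfNormal) ?_ h1 hs).1
      intro x y hx hu
      have hnw : NW x y := hu.full.nw (surfNormal_iff.1 hx).1
      exact ⟨hnw.surfNormal.1 hx, EStep.unb hx hu⟩
  · rcases claimW hI with h | ⟨P', m, h1, h2, hm⟩
    · refine ⟨Q, .refl, (chain_inv (p := fun x => ¬ SurfNormal x) ?_ h hs).1⟩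
      rintro x y hx ⟨hnw, _, hu⟩
      refine ⟨fun h => hx (hnw.surfNormal.2 h), Step.bv hnw.full, fun hE => ?_⟩
      rcases estep_single hE _ rfl with h | h
      · exact hu h.2
      · exact hx h.1
    · obtain ⟨R, hR1, hR2⟩ := ih m (by omega) h2
      exact ⟨R, (chain_mono (fun _ _ => weak_E1) h1).trans hR1, hR2⟩

theorem IS.oplusRed {N N1 N2} (h : OplusRed N N1 N2) : ∀ {b P}, IS b P N →
    ∃ P1 P2, OplusRed P P1 P2 ∧ (∃ m, Std m P1 N1) ∧ (∃ m, Std m P2 N2) := by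
  induction h with
  | root M N =>
    intro b P hI
    cases hI with
    | oplus h1 h2 h3 h4 =>
      exact ⟨_, _, OplusRed.root _ _, ⟨_, h1.std h2.std⟩, ⟨_, h3.std h4.std⟩⟩
  | appL _ ih =>
    intro b P hI
    cases hI with
    | app h1 h2 =>
      obtain ⟨P1, P2, ho, ⟨_, s1⟩, ⟨_, s2⟩⟩ := ih h1
      exact ⟨_, _, OplusRed.appL ho, ⟨_, s1.app h2.std⟩, ⟨_, s2.app h2.std⟩⟩
  | appR _ ih =>
    intro b P hI
    cases hI with
    | app h1 h2 =>
      obtain ⟨P1, P2, ho, ⟨_, s1⟩, ⟨_, s2⟩⟩ := ih h2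
      exact ⟨_, _, OplusRed.appR ho, ⟨_, h1.std.app s1⟩, ⟨_, h1.std.app s2⟩⟩

theorem Lift.refl' {r : PTm → MDist → Prop} (m : MDist) : Lift r m m := by
  induction m using Multiset.induction_on with
  | empty => exact Lift.zero
  | cons a m ih => exact Lift.keep (p := a.1) (M := a.2) ih

theorem Lift.add {r : PTm → MDist → Prop} {m n m' n' : MDist} (h : Lift r m n)
    (h' : Lift r m' n') : Lift r (m + m') (n + n') := by
  induction h with
  | zero => simpa using h'
  | keep _ ih => rw [Multiset.cons_add, Multiset.cons_add]; exact Lift.keep ih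
  | step hr _ ih => rw [Multiset.cons_add, add_assoc]; exact Lift.step hr ih

theorem dist_star_add {r : PTm → MDist → Prop} {m n m' n' : MDist} (h : ReflTransGen (Lift r) m n)
    (h' : ReflTransGen (Lift r) m' n') : ReflTransGen (Lift r) (m + m') (n + n') := by
  refine ReflTransGen.trans (b := n + m') ?_ ?_
  · induction h with
    | refl => exact .refl
    | tail _ h ih => exact ih.tail (h.add (Lift.refl' _))
  · induction h' with
    | refl => exact .refl
    | tail _ h ih => exact ih.tail ((Lift.refl' _).add h)

theorem scale_single (p : NNReal) (M : PTm) : scale p (single M) = {(p, M)} := by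
  simp [scale, single]

theorem lift_one {r : PTm → MDist → Prop} {M d} (p : NNReal) (h : r M d) :
    Lift r {(p, M)} (scale p d) := by
  have := Lift.step (p := p) h Lift.zero
  simpa using this

theorem dist_star_one {r : PTm → MDist → Prop} (p : NNReal) {M N : PTm}
    (h : ReflTransGen (fun a b => r a (single b)) M N) :
    ReflTransGen (Lift r) {(p, M)} {(p, N)} := by
  induction h with
  | refl => exact .refl
  | tail _ h ih =>
    refine ih.tail ?_
    have := lift_one p h
    rwa [scale_single] at this

def CR (a b : NNReal × PTm) : Prop := a.1 = b.1 ∧ ∃ n, IS n a.2 b.2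

theorem std_rel {n P N} (p : NNReal) (h : Std n P N) :
    ∃ f, ReflTransGen (Lift EStep) {(p, P)} f ∧ Multiset.Rel CR f {(p, N)} := by
  obtain ⟨a, b, Q, rfl, hW, hI⟩ := h
  exact ⟨{(p, Q)}, dist_star_one p hW.e1, Multiset.rel_cons_right.2
    ⟨(p, Q), 0, ⟨rfl, b, hI⟩, Multiset.Rel.zero, rfl⟩⟩

theorem step_rel {b P N e} (p : NNReal) (hI : IS b P N) (h : Step N e) :
    ∃ f, ReflTransGen (Lift EStep) {(p, P)} f ∧ Multiset.Rel CR f (scale p e) := by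
  cases h with
  | bv h =>
    obtain ⟨m, hs⟩ := std_full h hI
    rw [scale_single]
    exact std_rel p hs
  | oplus h =>
    obtain ⟨P1, P2, ho, ⟨_, s1⟩, ⟨_, s2⟩⟩ := hI.oplusRed h
    obtain ⟨f1, e1, r1⟩ := std_rel (p * (1 / 2)) s1
    obtain ⟨f2, e2, r2⟩ := std_rel (p * (1 / 2)) s2
    have key : ∀ A B : PTm, scale p {((1 : NNReal) / 2, A), ((1 : NNReal) / 2, B)} =
        {(p * (1 / 2), A)} + {(p * (1 / 2), B)} := by
      intro A B
      simp only [scale, Multiset.insert_eq_cons, Multiset.map_cons, Multiset.map_singleton]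
      rfl
    have hE : EStep P {((1 : NNReal) / 2, P1), ((1 : NNReal) / 2, P2)} :=
      EStep.surf (fun hn => hn _ (SStep.oplus ho)) (SStep.oplus ho)
    refine ⟨f1 + f2, .head (lift_one p hE) ?_, ?_⟩
    · rw [key]; exact dist_star_add e1 e2
    · rw [key]; exact r1.add r2

theorem lift_rel {n n' : MDist} (h : Lift Step n n') : ∀ {d}, Multiset.Rel CR d n →
    ∃ d', ReflTransGen (Lift EStep) d d' ∧ Multiset.Rel CR d' n' := by
  induction h with
  | zero => intro d hd; exact ⟨d, .refl, hd⟩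
  | @keep p M m n _ ih =>
    intro d hd
    obtain ⟨a, as, ha, has, rfl⟩ := Multiset.rel_cons_right.1 hd
    obtain ⟨d', h1, h2⟩ := ih has
    refine ⟨a ::ₘ d', ?_, Multiset.Rel.cons ha h2⟩
    rw [← Multiset.singleton_add, ← Multiset.singleton_add]
    exact dist_star_add .refl h1
  | @step p M e m n hs _ ih =>
    intro d hd
    obtain ⟨⟨q, P⟩, as, ⟨hq, b, hI⟩, has, rfl⟩ := Multiset.rel_cons_right.1 hd
    obtain ⟨d', h1, h2⟩ := ih has
    obtain ⟨f, h3, h4⟩ := step_rel p hI hs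
    dsimp only at hq
    subst hq
    refine ⟨f + d', ?_, h4.add h2⟩
    rw [← Multiset.singleton_add]
    exact dist_star_add h3 h1

theorem rel_factor {d n : MDist} (h : Multiset.Rel CR d n) :
    ∃ d', ReflTransGen (Lift EStep) d d' ∧ ReflTransGen (Lift IStep) d' n := by
  induction h with
  | zero => exact ⟨0, .refl, .refl⟩
  | @cons a b as bs hab _ ih =>
    obtain ⟨d', h1, h2⟩ := ih
    obtain ⟨p, P⟩ := a
    obtain ⟨q, N⟩ := b
    obtain ⟨hq, k, hI⟩ := hab
    dsimp only at hq hI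
    subst hq
    obtain ⟨P', h3, h4⟩ := term_factor k hI.std
    refine ⟨{(p, P')} + d', ?_, ?_⟩
    · rw [← Multiset.singleton_add]; exact dist_star_add (dist_star_one p h3) h1
    · rw [← Multiset.singleton_add]; exact dist_star_add (dist_star_one p h4) h2

theorem main_factor {m n : MDist} (h : ReflTransGen (Lift Step) m n) :
    ∃ d, ReflTransGen (Lift EStep) m d ∧ ReflTransGen (Lift IStep) d n := by
  have H : ∃ d, ReflTransGen (Lift EStep) m d ∧ Multiset.Rel CR d n := by
    induction h with
    | refl => exact ⟨m, .refl, Multiset.rel_refl_of_refl_on fun a _ => ⟨rfl, 0, IS.refl _⟩⟩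
    | tail _ h ih =>
      obtain ⟨d, h1, h2⟩ := ih
      obtain ⟨d', h3, h4⟩ := lift_rel h h2
      exact ⟨d', h1.trans h3, h4⟩
  obtain ⟨d, h1, h2⟩ := H
  obtain ⟨d', h3, h4⟩ := rel_factor h2
  exact ⟨d', h1.trans h3, h4⟩

/-! ### Neutrality -/

theorem full_not_unb {M M' : PTm} (h : FullBv M M') : ¬ UnbBv M M' → ∃ M'', FullBv M' M'' := by
  induction h with
  | beta hV => intro hu; exact absurd (UnbBv.weak (WeakBv.beta hV)) hu
  | lam _ ih =>
    intro hu
    obtain ⟨R, hR⟩ := ih fun h => hu (unb_lam h)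
    exact ⟨_, FullBv.lam hR⟩
  | @appL P P' Q h ih =>
    intro hu
    by_cases hw : HasW (PTm.app P Q)
    · have hnw : NW (PTm.app P Q) (PTm.app P' Q) :=
        (FullBv.appL h).cases_weak.resolve_left fun h' => hu (UnbBv.weak h')
      obtain ⟨R, hR⟩ := hnw.hasW.1 hw
      exact ⟨R, hR.full⟩
    · obtain ⟨R, hR⟩ := ih fun h => hu (UnbBv.appL (weakn hw) h)
      exact ⟨_, FullBv.appL hR⟩
  | @appR P Q Q' h ih =>
    intro hu
    by_cases hw : HasW (PTm.app P Q)
    · have hnw : NW (PTm.app P Q) (PTm.app P Q') :=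
        (FullBv.appR h).cases_weak.resolve_left fun h' => hu (UnbBv.weak h')
      obtain ⟨R, hR⟩ := hnw.hasW.1 hw
      exact ⟨R, hR.full⟩
    · obtain ⟨R, hR⟩ := ih fun h => hu (UnbBv.appR (weakn hw) h)
      exact ⟨_, FullBv.appR hR⟩
  | oplusL _ ih =>
    intro hu
    obtain ⟨R, hR⟩ := ih fun h => hu (UnbBv.oplusL (weakn hasW_oplus) h)
    exact ⟨_, FullBv.oplusL hR⟩
  | oplusR _ ih =>
    intro hu
    obtain ⟨R, hR⟩ := ih fun h => hu (UnbBv.oplusR (weakn hasW_oplus) h)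
    exact ⟨_, FullBv.oplusR hR⟩

theorem SStep.step {M m} (h : SStep M m) : Step M m := by
  cases h with
  | bv h => exact Step.bv h.full
  | oplus h => exact Step.oplus h

theorem istep_inv {M d} (h : IStep M d) :
    ∃ M', d = single M' ∧ ¬ TmNormal M ∧ ¬ TmNormal M' := by
  obtain ⟨hs, hE⟩ := h
  have hM : ¬ TmNormal M := fun hn => hn _ hs
  cases hs with
  | oplus h => exact absurd (EStep.surf (fun hn => hn _ (SStep.oplus h)) (SStep.oplus h)) hE
  | @bv M' h =>
    refine ⟨M', rfl, hM, fun hn => ?_⟩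
    by_cases hS : SurfNormal M
    · obtain ⟨R, hR⟩ := full_not_unb h fun hu => hE (EStep.unb hS hu)
      exact hn _ (Step.bv hR)
    · have hnw : NW M M' := h.cases_weak.resolve_left fun h' => hE (weak_E1 h')
      exact hS (hnw.surfNormal.2 fun m hm => hn m hm.step)

theorem main_neutral {m n : MDist} (h : Lift IStep m n) : obsN m = obsN n := by
  funext N
  unfold obsN
  by_cases hN : TmNormal N
  · rw [if_pos hN, if_pos hN]
    induction h with
    | zero => rfl
    | @keep p M m n _ ih =>
      by_cases hM : M = N
      · simp [Multiset.filter_cons, hM, ih]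
      · simp [Multiset.filter_cons, hM, ih]
    | @step p M d m n hs _ ih =>
      obtain ⟨M', rfl, h1, h2⟩ := istep_inv hs
      have hM : M ≠ N := fun e => h1 (e ▸ hN)
      have hM' : M' ≠ N := fun e => h2 (e ▸ hN)
      rw [scale_single, Multiset.singleton_add]
      simp [Multiset.filter_cons, hM, hM', ih]
  · rw [if_neg hN, if_neg hN]

/-- **Factorization and neutrality in the probabilistic Call-by-Value λ-calculus**:
(1) if `m ⇒* n` then there exists `d` with `m ⇛E* d` and `d ⇛¬E* n`;
(2) if `m ⇛¬E n` then `obsN(m) = obsN(n)`. -/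
theorem prob_cbv_factorization_and_neutrality :
    (∀ m n : MDist, IsMDist m → IsMDist n →
      Relation.ReflTransGen (Lift Step) m n →
      ∃ d : MDist, Relation.ReflTransGen (Lift EStep) m d ∧
        Relation.ReflTransGen (Lift IStep) d n) ∧
    (∀ m n : MDist, IsMDist m → Lift IStep m n → obsN m = obsN n) := by
  exact ⟨fun _ _ _ _ h => main_factor h, fun _ _ _ h => main_neutral h⟩
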